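/- arXiv:2006.04064 — 2 statements merged into one kernel-verified Lean document; each statement's English description precedes it below -/
import Mathlib

section
/- Let n, f, g be positive integers, let A be an n×n real matrix, Z an n×f real matrix, H an n×f real matrix, and W an f×g real matrix, and let J_n denote the n×n all-ones matrix. Then ∑_{i=1}^{f} (A ⊙ (J_n · diag(Z[:,i])))·H[:,i]·W[i,:] = A·(Z ⊙ H)·W, where diag(Z[:,i]) is the diagonal matrix with the i-th column of Z on its diagonal. Hence choosing the GDC channel masks as Z_i = J_n·diag(Z[:,i]) recovers the DropOut layer, so DropOut is a special case of GDC. -/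
open Matrix BigOperators

/-- The `i`-th column of a matrix, as an `n × 1` matrix. -/
def colM {n f : ℕ} (H : Matrix (Fin n) (Fin f) ℝ) (i : Fin f) :
    Matrix (Fin n) (Fin 1) ℝ := fun v _ => H v i

/-- The `i`-th row of a matrix, as a `1 × g` matrix. -/
def rowM {f g : ℕ} (W : Matrix (Fin f) (Fin g) ℝ) (i : Fin f) :
    Matrix (Fin 1) (Fin g) ℝ := fun _ j => W i j

/-- The `n × n` all-ones matrix. -/
def allOnes (n : ℕ) : Matrix (Fin n) (Fin n) ℝ := fun _ _ => 1

section

variable {l m k p α : Type*} [Fintype m]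

theorem sum_vecMulVec_col_row [NonUnitalNonAssocSemiring α]
    (M : Matrix l m α) (N : Matrix m k α) :
    ∑ i, vecMulVec (M.col i) (N.row i) = M * N := by
  ext u j
  simp [Matrix.sum_apply, vecMulVec_apply, mul_apply]

variable [DecidableEq m]

theorem diagonal_col_mulVec_col [NonUnitalNonAssocSemiring α]
    (Z H : Matrix m k α) (i : k) :
    diagonal (Z.col i) *ᵥ H.col i = (Z ⊙ H).col i :=
  funext fun v => mulVec_diagonal (Z.col i) (H.col i) v

theorem hadamard_mul_diagonal [NonUnitalSemiring α]
    (A B : Matrix l m α) (d : m → α) :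
    A ⊙ (B * diagonal d) = (A ⊙ B) * diagonal d := by
  ext u v
  simp [mul_assoc]

theorem gdc_recovers_dropout_general [Fintype k] [Semiring α]
    (A : Matrix l m α) (Z H : Matrix m k α) (W : Matrix k p α) :
    ∑ i, (A ⊙ ((of 1 : Matrix l m α) * diagonal (Z.col i))) *
        vecMulVec (H.col i) (W.row i)
      = A * (Z ⊙ H) * W := by
  have channel (i : k) :
      (A ⊙ ((of 1 : Matrix l m α) * diagonal (Z.col i))) * vecMulVec (H.col i) (W.row i)
        = A * vecMulVec ((Z ⊙ H).col i) (W.row i) := by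
    rw [hadamard_mul_diagonal, hadamard_of_one, Matrix.mul_assoc, mul_vecMulVec,
      diagonal_col_mulVec_col]
  calc
    _ = ∑ i, A * vecMulVec ((Z ⊙ H).col i) (W.row i) := Fintype.sum_congr _ _ channel
    _ = A * ∑ i, vecMulVec ((Z ⊙ H).col i) (W.row i) := (Matrix.mul_sum _ _ A).symm
    _ = A * ((Z ⊙ H) * W) := by rw [sum_vecMulVec_col_row]
    _ = A * (Z ⊙ H) * W := (Matrix.mul_assoc A (Z ⊙ H) W).symm

end

theorem colM_mul_rowM {n f g : ℕ} (H : Matrix (Fin n) (Fin f) ℝ)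
    (W : Matrix (Fin f) (Fin g) ℝ) (i : Fin f) :
    colM H i * rowM W i = vecMulVec (H.col i) (W.row i) :=
  (vecMulVec_eq (Fin 1) (H.col i) (W.row i)).symm

/-- Choosing the GDC channel masks as `Zᵢ = Jₙ ⬝ diag(Z[:,i])` recovers the DropOut layer
`A ⬝ (Z ⊙ H) ⬝ W`, so DropOut is a special case of GDC. -/
theorem gdc_recovers_dropout (n f g : ℕ) (hn : 0 < n) (hf : 0 < f) (hg : 0 < g)
    (A : Matrix (Fin n) (Fin n) ℝ) (Z H : Matrix (Fin n) (Fin f) ℝ)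
    (W : Matrix (Fin f) (Fin g) ℝ) :
    ∑ i : Fin f,
        (A ⊙ (allOnes n * Matrix.diagonal (fun v => Z v i))) * (colM H i * rowM W i)
      = A * (Z ⊙ H) * W := by
  simp_rw [colM_mul_rowM]
  exact gdc_recovers_dropout_general A Z H W
end

section
/- For all real a > 0 and b > 0, ∫₀¹ (log x)·a·b·x^{a−1}·(1 − x^a)^{b−1} dx = −(1/a)·(γ + ψ(b) + 1/b), where γ is the Euler–Mascheroni constant and ψ(b) denotes the digamma function, i.e., the derivative of log Γ at b. That is, the expectation of log π under the Kumaraswamy(a,b) distribution equals −(γ + ψ(b) + 1/b)/a. -/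
open Real

/-- The digamma function `ψ`, the derivative of `log ∘ Γ`. -/
noncomputable def digamma (x : ℝ) : ℝ := deriv (fun y => Real.log (Real.Gamma y)) x

/-
Substituting `y = x ^ a` turns the expectation into `b / a` times the logarithmic moment
`∫₀¹ log y * (1 - y) ^ (b - 1) dy`. Logarithmic moments of a Beta integrand are derivatives of the
Beta function in its first parameter, `∂ᵤ B(u, v) = B(u, v) (ψ(u) - ψ(u + v))`; here `u = 1` and
`v = b`, where `B(1, b) = 1 / b`, `ψ(1) = -γ` and `ψ(b + 1) = ψ(b) + 1 / b`.
-/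

open MeasureTheory Set Filter Topology ProbabilityTheory

section Rpow

theorem rpow_mul_abs_log_le {x p q ε : ℝ} (hx₀ : 0 < x) (hx₁ : x ≤ 1) (hε : 0 < ε)
    (hpq : p + ε ≤ q) : x ^ q * |log x| ≤ ε⁻¹ * x ^ p := by
  have hlog : x ^ ε * |log x| ≤ ε⁻¹ := by
    have h := (abs_log_mul_self_rpow_lt x ε hx₀ hx₁ hε).le
    rwa [one_div, abs_mul, abs_of_pos (rpow_pos_of_pos hx₀ _), mul_comm] at h
  calc x ^ q * |log x| ≤ x ^ (p + ε) * |log x| :=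
        mul_le_mul_of_nonneg_right (rpow_le_rpow_of_exponent_ge hx₀ hx₁ hpq) (abs_nonneg _)
    _ = x ^ ε * |log x| * x ^ p := by rw [rpow_add hx₀]; ring
    _ ≤ ε⁻¹ * x ^ p := by gcongr

theorem integral_comp_rpow {E : Type*} [NormedAddCommGroup E] [NormedSpace ℝ E] (g : ℝ → E)
    {a p q : ℝ} (ha : 0 < a) (hp : 0 ≤ p) (hq : 0 ≤ q) :
    ∫ x in p..q, (a * x ^ (a - 1)) • g (x ^ a) = ∫ y in p ^ a..q ^ a, g y := by
  have hpos : ∀ x ∈ Ioo (min p q) (max p q), 0 < x := fun x hx => (le_min hp hq).trans_lt hx.1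
  exact intervalIntegral.integral_deriv_smul_comp_of_deriv_nonneg
    (continuous_rpow_const ha.le).continuousOn
    (fun x hx => hasDerivAt_rpow_const (.inl (hpos x hx).ne'))
    (fun x hx => mul_nonneg ha.le (rpow_nonneg (hpos x hx).le _))

end Rpow

section Digamma

variable {x : ℝ}

theorem ne_neg_natCast_of_pos (hx : 0 < x) (m : ℕ) : x ≠ -m :=
  ((neg_nonpos.2 m.cast_nonneg).trans_lt hx).ne'

theorem hasDerivAt_Gamma (hx : ∀ m : ℕ, x ≠ -m) :
    HasDerivAt Gamma (Gamma x * digamma x) x := by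
  have hΓ := (differentiableAt_Gamma hx).hasDerivAt
  have hne := Gamma_ne_zero hx
  rwa [digamma, (hΓ.log hne).deriv, mul_div_cancel₀ _ hne]

theorem ofReal_digamma (hx : ∀ m : ℕ, x ≠ -m) : (digamma x : ℂ) = Complex.digamma x := by
  have hxℂ : ∀ m : ℕ, (x : ℂ) ≠ -m := fun m h => hx m (by exact_mod_cast h)
  have hΓℂ : HasDerivAt (fun y : ℝ => (Gamma y : ℂ)) (deriv Complex.Gamma x) x := by
    simpa only [Complex.Gamma_ofReal] using
      (Complex.differentiableAt_Gamma x hxℂ).hasDerivAt.comp_ofReal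
  have hne : (Gamma x : ℂ) ≠ 0 := Complex.ofReal_ne_zero.2 (Gamma_ne_zero hx)
  rw [Complex.digamma_def, logDeriv_apply, hΓℂ.unique (hasDerivAt_Gamma hx).ofReal_comp,
    Complex.Gamma_ofReal, Complex.ofReal_mul, mul_div_cancel_left₀ _ hne]

theorem digamma_one : digamma 1 = -eulerMascheroniConstant := by
  have h := ofReal_digamma (ne_neg_natCast_of_pos one_pos)
  rw [Complex.ofReal_one, Complex.digamma_one] at h
  exact_mod_cast h

theorem digamma_add_one (hx : ∀ m : ℕ, x ≠ -m) : digamma (x + 1) = digamma x + x⁻¹ := by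
  have hx' : ∀ m : ℕ, x + 1 ≠ -m := fun m h => hx (m + 1) (by push_cast; linarith)
  have h := Complex.digamma_apply_add_one x fun m h => hx m (by exact_mod_cast h)
  rw [← ofReal_digamma hx, ← Complex.ofReal_one, ← Complex.ofReal_add, ← ofReal_digamma hx'] at h
  exact_mod_cast h

end Digamma

section Beta

variable {u v : ℝ}

theorem beta_one_left (hv : ∀ m : ℕ, v ≠ -m) : beta 1 v = v⁻¹ := by
  have hv₀ : v ≠ 0 := by simpa using hv 0
  rw [beta, Gamma_one, one_mul, add_comm, Gamma_add_one hv₀,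
    div_mul_cancel_right₀ (Gamma_ne_zero hv)]

theorem hasDerivAt_beta_left (hu : ∀ m : ℕ, u ≠ -m) (huv : ∀ m : ℕ, u + v ≠ -m) :
    HasDerivAt (fun s => beta s v) (beta u v * (digamma u - digamma (u + v))) u := by
  have hne : Gamma (u + v) ≠ 0 := Gamma_ne_zero huv
  have hnum : HasDerivAt (fun s => Gamma s * Gamma v) (Gamma u * digamma u * Gamma v) u :=
    (hasDerivAt_Gamma hu).mul_const _
  have hden : HasDerivAt (fun s => Gamma (s + v)) (Gamma (u + v) * digamma (u + v)) u :=
    (hasDerivAt_Gamma huv).comp_add_const u v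
  refine (hnum.div hden hne).congr_deriv ?_
  rw [beta]
  field_simp

theorem ofReal_rpow_mul_one_sub_rpow (u v : ℝ) {x : ℝ} (hx : x ∈ Icc 0 1) :
    ((x ^ (u - 1) * (1 - x) ^ (v - 1) : ℝ) : ℂ) =
      (x : ℂ) ^ ((u : ℂ) - 1) * (1 - (x : ℂ)) ^ ((v : ℂ) - 1) := by
  push_cast [Complex.ofReal_cpow hx.1, Complex.ofReal_cpow (sub_nonneg.2 hx.2)]
  rfl

theorem intervalIntegrable_rpow_mul_one_sub_rpow (hu : 0 < u) (hv : 0 < v) :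
    IntervalIntegrable (fun x : ℝ => x ^ (u - 1) * (1 - x) ^ (v - 1)) volume 0 1 := by
  have hℂ := Complex.betaIntegral_convergent (u := u) (v := v) (by simpa) (by simpa)
  rw [intervalIntegrable_iff_integrableOn_Icc_of_le zero_le_one] at hℂ ⊢
  exact (hℂ.congr_fun (fun x hx => (ofReal_rpow_mul_one_sub_rpow u v hx).symm)
    measurableSet_Icc).re

theorem integral_rpow_mul_one_sub_rpow (hu : 0 < u) (hv : 0 < v) :
    ∫ x in (0 : ℝ)..1, x ^ (u - 1) * (1 - x) ^ (v - 1) = beta u v := by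
  rw [beta_eq_betaIntegralReal u v hu hv, Complex.betaIntegral,
    ← intervalIntegral.integral_congr_Ioo_of_le zero_le_one fun x hx =>
      ofReal_rpow_mul_one_sub_rpow u v (Ioo_subset_Icc_self hx),
    intervalIntegral.integral_ofReal, Complex.ofReal_re]

theorem hasDerivAt_integral_rpow_mul_one_sub_rpow_left (hu : 0 < u) (hv : 0 < v) :
    HasDerivAt (fun s : ℝ => ∫ x in (0 : ℝ)..1, x ^ (s - 1) * (1 - x) ^ (v - 1))
      (∫ x in (0 : ℝ)..1, log x * (x ^ (u - 1) * (1 - x) ^ (v - 1))) u := by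
  -- For `s > u / 2`, a factor `x ^ (u / 4)` absorbs `log x` and leaves at most `x ^ (u / 4 - 1)`.
  refine (intervalIntegral.hasDerivAt_integral_of_dominated_loc_of_deriv_le
    (F' := fun s x => log x * (x ^ (s - 1) * (1 - x) ^ (v - 1)))
    (bound := fun x => (u / 4)⁻¹ * (x ^ (u / 4 - 1) * (1 - x) ^ (v - 1)))
    (Ioi_mem_nhds (half_lt_self hu))
    (.of_forall fun s => Measurable.aestronglyMeasurable (by fun_prop))
    (intervalIntegrable_rpow_mul_one_sub_rpow hu hv)
    (Measurable.aestronglyMeasurable (by fun_prop))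
    (.of_forall fun x hx s (hs : u / 2 < s) => ?bound)
    ((intervalIntegrable_rpow_mul_one_sub_rpow (by positivity) hv).const_mul _)
    (.of_forall fun x hx s _ => ?deriv)).2
  all_goals rw [uIoc_of_le zero_le_one] at hx
  case bound =>
    have hx' : 0 ≤ (1 - x) ^ (v - 1) := rpow_nonneg (sub_nonneg.2 hx.2) _
    have hlog : x ^ (s - 1) * |log x| ≤ (u / 4)⁻¹ * x ^ (u / 4 - 1) :=
      rpow_mul_abs_log_le hx.1 hx.2 (by positivity) (by linarith)
    calc ‖log x * (x ^ (s - 1) * (1 - x) ^ (v - 1))‖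
        = x ^ (s - 1) * |log x| * (1 - x) ^ (v - 1) := by
          rw [norm_mul, norm_of_nonneg (mul_nonneg (rpow_nonneg hx.1.le _) hx'), norm_eq_abs]
          ring
      _ ≤ (u / 4)⁻¹ * x ^ (u / 4 - 1) * (1 - x) ^ (v - 1) := by gcongr
      _ = (u / 4)⁻¹ * (x ^ (u / 4 - 1) * (1 - x) ^ (v - 1)) := mul_assoc _ _ _
  case deriv =>
    have hpow : HasDerivAt (fun s => x ^ (s - 1)) (log x * x ^ (s - 1)) s := by
      simpa using ((hasDerivAt_id s).sub_const 1).const_rpow hx.1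
    simpa only [mul_assoc] using hpow.mul_const ((1 - x) ^ (v - 1))

theorem integral_log_mul_rpow_mul_one_sub_rpow (hu : 0 < u) (hv : 0 < v) :
    ∫ x in (0 : ℝ)..1, log x * (x ^ (u - 1) * (1 - x) ^ (v - 1)) =
      beta u v * (digamma u - digamma (u + v)) := by
  have hbeta : (fun s : ℝ => ∫ x in (0 : ℝ)..1, x ^ (s - 1) * (1 - x) ^ (v - 1))
      =ᶠ[𝓝 u] fun s => beta s v := by
    filter_upwards [Ioi_mem_nhds hu] with s hs using integral_rpow_mul_one_sub_rpow hs hv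
  have hderiv := hasDerivAt_beta_left (ne_neg_natCast_of_pos hu)
    (ne_neg_natCast_of_pos (add_pos hu hv))
  exact (hasDerivAt_integral_rpow_mul_one_sub_rpow_left hu hv).unique
    (hderiv.congr_of_eventuallyEq hbeta)

theorem integral_log_mul_one_sub_rpow (hv : 0 < v) :
    ∫ x in (0 : ℝ)..1, log x * (1 - x) ^ (v - 1) =
      -(eulerMascheroniConstant + digamma v + v⁻¹) / v := by
  have h := integral_log_mul_rpow_mul_one_sub_rpow one_pos hv
  simp only [sub_self, rpow_zero, one_mul] at h
  have hv' := ne_neg_natCast_of_pos hv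
  rw [h, beta_one_left hv', digamma_one, add_comm 1 v, digamma_add_one hv']
  ring

end Beta

/-- The expectation of `log π` under the Kumaraswamy(a, b) distribution equals
`-(γ + ψ(b) + 1/b) / a`, where `γ` is the Euler–Mascheroni constant. -/
theorem kumaraswamy_expectation_log (a b : ℝ) (ha : 0 < a) (hb : 0 < b) :
    ∫ x in (0:ℝ)..1, Real.log x * (a * b * x ^ (a - 1) * (1 - x ^ a) ^ (b - 1))
      = -(1/a) * (Real.eulerMascheroniConstant + digamma b + 1/b) := by
  have hsubst : EqOn (fun x => log x * (a * b * x ^ (a - 1) * (1 - x ^ a) ^ (b - 1)))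
      (fun x => b / a * ((a * x ^ (a - 1)) • (log (x ^ a) * (1 - x ^ a) ^ (b - 1))))
      (Ioo 0 1) := fun x hx => by
    simp only [log_rpow hx.1, smul_eq_mul]
    field_simp
  calc ∫ x in (0:ℝ)..1, log x * (a * b * x ^ (a - 1) * (1 - x ^ a) ^ (b - 1))
      = b / a * ∫ x in (0:ℝ)..1, (a * x ^ (a - 1)) • (log (x ^ a) * (1 - x ^ a) ^ (b - 1)) := by
        rw [intervalIntegral.integral_congr_Ioo_of_le zero_le_one hsubst,
          intervalIntegral.integral_const_mul]
    _ = b / a * ∫ y in (0:ℝ)..1, log y * (1 - y) ^ (b - 1) := by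
        rw [integral_comp_rpow (fun y => log y * (1 - y) ^ (b - 1)) ha le_rfl zero_le_one,
          zero_rpow ha.ne', one_rpow]
    _ = -(1 / a) * (eulerMascheroniConstant + digamma b + 1 / b) := by
        rw [integral_log_mul_one_sub_rpow hb]
        field_simp
end
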